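/- arXiv:2504.15115 — 3 statements merged into one kernel-verified Lean document; each statement's English description precedes it below -/
import Mathlib

section
/- Let (V, w, d) be a finite weighted metric space, i.e. V a finite set, d a metric on V, and w : V → ℝ≥0 a weight function, and for nonempty S ⊆ V and x ∈ V let d(x,S) = min_{y∈S} d(x,y) and cost(S) = ∑_{x∈V} w(x)·d(x,S). For nonempty A, B ⊆ V, let π(A,B) ⊆ B be a projection of A onto B, i.e. a set of the form { p(a) : a ∈ A } where for each a ∈ A, p(a) ∈ B satisfies d(a, p(a)) = d(a, B). Then cost(π(A,B)) ≤ cost(B) + 2·cost(A). -/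
/-!
The inequality holds pointwise: if `a ∈ A` and `b ∈ B` are nearest to `x`, then
`d(x, p a) ≤ d(x, a) + d(a, p a) ≤ d(x, a) + d(a, b) ≤ d(x, b) + 2 d(x, a)`,
where the middle step holds since `p a` is nearest to `a` in `B`.
Summing over `x` with the weights `w x` gives the bound on costs.
-/

open Finset

/-- Distance from a point to a (nonempty) finite set: `min_{y ∈ S} d(x,y)`. -/
noncomputable def distToSet {V : Type*} [MetricSpace V] (x : V) (S : Finset V) : ℝ :=
  sInf ((fun y => dist x y) '' ↑S)

/-- `k`-median cost of a center set `S` with respect to the point set `U`: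
`∑_{x ∈ U} w(x) · d(x, S)`. -/
noncomputable def kCost {V : Type*} [MetricSpace V] (w : V → NNReal) (S U : Finset V) : ℝ :=
  ∑ x ∈ U, (w x : ℝ) * distToSet x S

/-- `OPT_k(U, X)`: minimum over `S ⊆ X` with `|S| = k` of `kCost w S U`. -/
noncomputable def kOPT {V : Type*} [MetricSpace V] (w : V → NNReal) (k : ℕ) (U X : Finset V) : ℝ :=
  sInf {c : ℝ | ∃ S : Finset V, S ⊆ X ∧ S.card = k ∧ c = kCost w S U}

lemma distToSet_le {V : Type*} [MetricSpace V] (x : V) {S : Finset V} {y : V} (hy : y ∈ S) :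
    distToSet x S ≤ dist x y :=
  csInf_le (S.finite_toSet.image _).bddBelow ⟨y, hy, rfl⟩

lemma exists_dist_eq_distToSet {V : Type*} [MetricSpace V] (x : V) {S : Finset V}
    (hS : S.Nonempty) : ∃ y ∈ S, dist x y = distToSet x S :=
  (hS.to_set.image (fun y => dist x y)).csInf_mem (S.finite_toSet.image _)

/-- Projection lemma for `k`-median: `cost(π(A,B)) ≤ cost(B) + 2·cost(A)`. -/
theorem projection_lemma_kmedian {V : Type*} [Fintype V] [MetricSpace V] [DecidableEq V]
    (w : V → NNReal) (A B : Finset V) (hA : A.Nonempty) (hB : B.Nonempty)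
    (p : V → V) (hpB : ∀ a ∈ A, p a ∈ B)
    (hpd : ∀ a ∈ A, dist a (p a) = distToSet a B) :
    kCost w (A.image p) Finset.univ ≤
      kCost w B Finset.univ + 2 * kCost w A Finset.univ := by
  unfold kCost
  rw [Finset.mul_sum, ← Finset.sum_add_distrib]
  refine Finset.sum_le_sum fun x _ => ?_
  have key : distToSet x (A.image p) ≤ distToSet x B + 2 * distToSet x A := by
    obtain ⟨a, ha, hxa⟩ := exists_dist_eq_distToSet x hA
    obtain ⟨b, hb, hxb⟩ := exists_dist_eq_distToSet x hB
    have h1 := distToSet_le x (Finset.mem_image_of_mem p ha)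
    have h2 := distToSet_le a hb
    have h3 := dist_triangle x a (p a)
    have h4 := dist_triangle_left a b x
    have h5 := hpd a ha
    linarith
  have := mul_le_mul_of_nonneg_left key (w x).coe_nonneg
  linarith
end

section
/- Let (V, w, d) be a finite weighted metric space and k ≥ 1 an integer. Let Q be a partition of V into nonempty parts each of size at least k. Then ∑_{X ∈ Q} OPT_k(X) ≤ 2·OPT_k(V, V), where OPT_k(X) := min over S ⊆ X with |S| = k of ∑_{x∈X} w(x)·d(x,S) and OPT_k(V,V) := min over S ⊆ V with |S| = k of ∑_{x∈V} w(x)·d(x,S). -/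
/-!
Fix any set `S` of `k` centers in `V`. For a part `X`, move each `s ∈ S` to a nearest point
`p s ∈ X`. If `s` is the center nearest to `x ∈ X`, then `d(s, p s) ≤ d(s, x)`, so
`d(x, p s) ≤ d(x, s) + d(s, p s) ≤ 2 d(x, S)`. The image `p(S) ⊆ X` has at most `k ≤ |X|` points,
and enlarging it to exactly `k` points of `X` only lowers the cost; hence
`OPT_k(X) ≤ 2 cost(S, X)` (`kOPT_le_two_mul_kCost`). Summing over the parts gives
`2 cost(S, V)`, and the infimum over `S` gives the claim.
-/


open Finset

lemma distToSet_nonneg {V : Type*} [MetricSpace V] (x : V) (S : Finset V) :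
    0 ≤ distToSet x S :=
  Real.sInf_nonneg (by rintro _ ⟨z, -, rfl⟩; exact dist_nonneg)

lemma exists_distToSet_eq {V : Type*} [MetricSpace V] (x : V) {S : Finset V} (hS : S.Nonempty) :
    ∃ y ∈ S, distToSet x S = dist x y := by
  have h : distToSet x S ∈ (fun y => dist x y) '' (S : Set V) :=
    Set.Nonempty.csInf_mem (hS.to_set.image _) (S.finite_toSet.image _)
  obtain ⟨y, hy, h⟩ := h
  exact ⟨y, hy, h.symm⟩

lemma kCost_nonneg {V : Type*} [MetricSpace V] (w : V → NNReal) (S U : Finset V) :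
    0 ≤ kCost w S U :=
  Finset.sum_nonneg fun x _ => mul_nonneg (w x).2 (distToSet_nonneg x S)

lemma kOPT_nonneg {V : Type*} [MetricSpace V] (w : V → NNReal) (k : ℕ) (U X : Finset V) :
    0 ≤ kOPT w k U X :=
  Real.sInf_nonneg (by rintro _ ⟨S, -, -, rfl⟩; exact kCost_nonneg w S U)

/-- Forcing the centers to lie in the point set `X` at most doubles the cost. -/
lemma kOPT_le_two_mul_kCost {V : Type*} [MetricSpace V] [DecidableEq V]
    (w : V → NNReal) {k : ℕ} (hk : 1 ≤ k) {X S : Finset V}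
    (hX : k ≤ X.card) (hS : S.card = k) :
    kOPT w k X X ≤ 2 * kCost w S X := by
  have hXne : X.Nonempty := Finset.card_pos.mp (by lia)
  have hSne : S.Nonempty := Finset.card_pos.mp (by lia)
  choose p hpX hp using fun s : V => exists_distToSet_eq s hXne
  obtain ⟨T, hpT, hTX, hT⟩ := Finset.exists_subsuperset_card_eq
    (s := S.image p) (t := X) (n := k) (Finset.image_subset_iff.mpr fun s _ => hpX s)
    (hS ▸ Finset.card_image_le) hX
  have hle : kOPT w k X X ≤ kCost w T X :=
    csInf_le ⟨0, by rintro _ ⟨R, -, -, rfl⟩; exact kCost_nonneg w R X⟩ ⟨T, hTX, hT, rfl⟩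
  refine hle.trans ?_
  unfold kCost
  rw [Finset.mul_sum]
  refine Finset.sum_le_sum fun x hx => ?_
  obtain ⟨s, hs, hxs⟩ := exists_distToSet_eq x hSne
  have h1 : distToSet x T ≤ dist x (p s) :=
    distToSet_le x (hpT (Finset.mem_image_of_mem p hs))
  have h2 : dist s (p s) ≤ dist s x := hp s ▸ distToSet_le s hx
  have h3 := dist_triangle x s (p s)
  rw [dist_comm s x] at h2
  have h4 : distToSet x T ≤ 2 * distToSet x S := by linarith
  linarith [mul_le_mul_of_nonneg_left h4 (w x).coe_nonneg]

/-- For a partition `Q` of `V` into nonempty parts of size at least `k`,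
`∑_{X ∈ Q} OPT_k(X) ≤ 2 · OPT_k(V, V)`. -/
theorem sum_opt_parts_le_two_opt {V : Type*} [Fintype V] [MetricSpace V] [DecidableEq V]
    (w : V → NNReal) (k : ℕ) (hk : 1 ≤ k)
    (Q : Finset (Finset V))
    (hdisj : (Q : Set (Finset V)).PairwiseDisjoint id)
    (hunion : Q.biUnion id = Finset.univ)
    (hne : ∀ X ∈ Q, X.Nonempty)
    (hsize : ∀ X ∈ Q, k ≤ X.card) :
    ∑ X ∈ Q, kOPT w k X X ≤ 2 * kOPT w k Finset.univ Finset.univ := by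
  rcases Q.eq_empty_or_nonempty with rfl | ⟨X₀, hX₀⟩
  · simpa using kOPT_nonneg w k Finset.univ Finset.univ
  -- A part of size at least `k` provides a feasible center set, so the infimum is not over `∅`.
  obtain ⟨S₀, -, hS₀⟩ := Finset.exists_subset_card_eq (hsize X₀ hX₀)
  suffices h : (∑ X ∈ Q, kOPT w k X X) / 2 ≤ kOPT w k Finset.univ Finset.univ by linarith
  refine le_csInf ⟨_, S₀, Finset.subset_univ _, hS₀, rfl⟩ ?_
  rintro _ ⟨S, -, hS, rfl⟩
  have hsum : kCost w S Finset.univ = ∑ X ∈ Q, kCost w S X := by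
    unfold kCost
    rw [← hunion, Finset.sum_biUnion hdisj]
    rfl
  have hparts : ∑ X ∈ Q, kOPT w k X X ≤ ∑ X ∈ Q, 2 * kCost w S X :=
    Finset.sum_le_sum fun X hX => kOPT_le_two_mul_kCost w hk (hsize X hX) hS
  rw [← Finset.mul_sum, ← hsum] at hparts
  linarith
end

section
/- Let γ ≥ 1 be a real number and i ≥ 1 an integer. Then γ^(1 − 1/2^i) ≤ ∏_{j=1}^{i} ⌈γ^(1/2^j)⌉ ≤ e^i · γ^(1 − 1/2^i). -/
/-!
Each factor `x = γ^(1/2^j)` is at least `1`, so `x ≤ ⌈x⌉ ≤ x + 1 ≤ 2x ≤ e x`. Multiplying over `j`, both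
bounds follow from `∏ γ^(1/2^j) = γ^(1 - 1/2^i)`, the geometric series in the exponent.
-/

open Finset

/-- `γ^(1 − 1/2^i) ≤ ∏_{j=1}^{i} ⌈γ^(1/2^j)⌉ ≤ e^i · γ^(1 − 1/2^i)`. -/
theorem prod_ceil_rpow_bounds (γ : ℝ) (hγ : 1 ≤ γ) (i : ℕ) (hi : 1 ≤ i) :
    γ ^ ((1 : ℝ) - 1 / 2 ^ i) ≤
      (∏ j ∈ Finset.Icc 1 i, ((⌈γ ^ ((1 : ℝ) / 2 ^ j)⌉ : ℤ) : ℝ)) ∧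
    (∏ j ∈ Finset.Icc 1 i, ((⌈γ ^ ((1 : ℝ) / 2 ^ j)⌉ : ℤ) : ℝ)) ≤
      Real.exp 1 ^ i * γ ^ ((1 : ℝ) - 1 / 2 ^ i) := by
  have h0 : 0 < γ := by linarith
  -- Without the ceilings the product is exact: the exponents form a geometric series.
  have hprod : ∀ n : ℕ,
      ∏ j ∈ Finset.Icc 1 n, γ ^ ((1 : ℝ) / 2 ^ j) = γ ^ ((1 : ℝ) - 1 / 2 ^ n) := by
    intro n
    induction n with
    | zero => simp
    | succ k ih =>
      rw [Finset.prod_Icc_succ_top (by omega), ih, ← Real.rpow_add h0]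
      congr 1
      field_simp
      ring
  have hfac : ∀ j : ℕ, (1 : ℝ) ≤ γ ^ ((1 : ℝ) / 2 ^ j) := fun j =>
    Real.one_le_rpow hγ (by positivity)
  rw [← hprod i]
  constructor
  · exact Finset.prod_le_prod (fun j _ => by linarith [hfac j]) (fun j _ => Int.le_ceil _)
  · have hcard : Real.exp 1 ^ i = ∏ _j ∈ Finset.Icc 1 i, Real.exp 1 := by simp
    rw [hcard, ← Finset.prod_mul_distrib]
    refine Finset.prod_le_prod (fun j _ => ?_) (fun j _ => ?_)
    · linarith [hfac j, Int.le_ceil (γ ^ ((1 : ℝ) / 2 ^ j))]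
    · -- For `x ≥ 1`, `⌈x⌉ ≤ x + 1 ≤ 2 * x ≤ e * x`.
      have he : (2 : ℝ) ≤ Real.exp 1 := by linarith [Real.add_one_le_exp (1 : ℝ)]
      nlinarith [hfac j, Int.ceil_lt_add_one (γ ^ ((1 : ℝ) / 2 ^ j))]
end
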